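/- (Characterization of transposability.) Let A : 𝓢ₙ →ₗ[ℂ] 𝓢ₘ be a linear map between Schwartz spaces. Then A is topologically transposable — i.e., for every continuous linear functional a : 𝓢ₘ →L[ℂ] ℂ the composition φ ↦ a(A φ) is a continuous linear functional on 𝓢ₙ — if and only if for every point p ∈ ℝᵐ the composition δ_p ∘ A, i.e., the linear functional φ ↦ (A φ)(p) on 𝓢ₙ, is continuous (is a tempered distribution on ℝⁿ). -/

import Mathlib

/-- The Schwartz space `𝓢(ℝⁿ, ℂ)`. -/
abbrev Sch (n : ℕ) : Type := SchwartzMap (EuclideanSpace ℝ (Fin n)) ℂ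

open Filter Topology in
theorem sch_complete {E F : Type*} [NormedAddCommGroup E] [NormedSpace ℝ E]
    [NormedAddCommGroup F] [NormedSpace ℝ F] [CompleteSpace F] :
    CompleteSpace (SchwartzMap E F) := by
  have : (uniformity (SchwartzMap E F)).IsCountablyGenerated :=
    IsUniformAddGroup.uniformity_countably_generated
  refine UniformSpace.complete_of_cauchySeq_tendsto fun u hu => ?_
  -- Cauchy in each seminorm
  have hC : ∀ (k l : ℕ) (ε : ℝ), 0 < ε → ∃ N : ℕ, ∀ i ≥ N, ∀ j ≥ N, ∀ x : E,
      ‖x‖ ^ k * ‖iteratedFDeriv ℝ l (u i) x - iteratedFDeriv ℝ l (u j) x‖ ≤ ε := by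
    intro k l ε hε
    have h1 : Continuous (SchwartzMap.seminorm ℝ k l : SchwartzMap E F → ℝ) :=
      (schwartz_withSeminorms ℝ E F).continuous_seminorm (k, l)
    have h2 : {f : SchwartzMap E F | SchwartzMap.seminorm ℝ k l f < ε} ∈
        𝓝 (0 : SchwartzMap E F) := by
      apply (isOpen_lt h1 continuous_const).mem_nhds
      simpa using hε
    have h3 : {p : SchwartzMap E F × SchwartzMap E F |
        SchwartzMap.seminorm ℝ k l (p.2 - p.1) < ε} ∈ uniformity (SchwartzMap E F) := by
      rw [uniformity_eq_comap_nhds_zero]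
      exact ⟨_, h2, fun p hp => hp⟩
    obtain ⟨N, hN⟩ := cauchySeq_iff.1 hu _ h3
    refine ⟨N, fun i hi j hj x => ?_⟩
    have h4 := hN j hj i hi
    have h5 := SchwartzMap.le_seminorm ℝ k l (u i - u j) x
    rw [FunLike.coe_sub, iteratedFDeriv_sub_apply ((u i).contDiffAt _)
      ((u j).contDiffAt _)] at h5
    exact h5.trans (le_of_lt h4)
  have hlim : ∀ (l : ℕ) (x : E), ∃ g, Tendsto (fun i => iteratedFDeriv ℝ l (u i) x) atTop (𝓝 g) := by
    intro l x
    apply cauchySeq_tendsto_of_complete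
    rw [Metric.cauchySeq_iff]
    intro ε hε
    obtain ⟨N, hN⟩ := hC 0 l (ε / 2) (by positivity)
    refine ⟨N, fun i hi j hj => ?_⟩
    have := hN i hi j hj x
    rw [pow_zero, one_mul] at this
    rw [dist_eq_norm]
    linarith
  choose g hg using hlim
  -- quantitative convergence
  have hG : ∀ (k l : ℕ) (ε : ℝ), 0 < ε → ∃ N : ℕ, ∀ i ≥ N, ∀ x : E,
      ‖x‖ ^ k * ‖iteratedFDeriv ℝ l (u i) x - g l x‖ ≤ ε := by
    intro k l ε hε
    obtain ⟨N, hN⟩ := hC k l ε hε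
    refine ⟨N, fun i hi x => ?_⟩
    have ht : Tendsto (fun j => ‖x‖ ^ k * ‖iteratedFDeriv ℝ l (u i) x - iteratedFDeriv ℝ l (u j) x‖)
        atTop (𝓝 (‖x‖ ^ k * ‖iteratedFDeriv ℝ l (u i) x - g l x‖)) :=
      ((tendsto_const_nhds.sub (hg l x)).norm).const_mul _
    exact le_of_tendsto ht (eventually_atTop.2 ⟨N, fun j hj => hN i hi j hj x⟩)
  have hT : HasFTaylorSeriesUpTo (⊤ : ℕ∞) (fun x => (g 0 x).curry0) (fun x l => g l x) := by
    refine (hasFTaylorSeriesUpTo_top_iff' le_rfl).2 ⟨fun x => rfl, fun l x => ?_⟩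
    refine hasFDerivAt_of_tendstoUniformly (l := atTop)
      (f := fun i y => iteratedFDeriv ℝ l (u i) y)
      (f' := fun i y => (iteratedFDeriv ℝ (l+1) (u i) y).curryLeft)
      (g' := fun y => (g (l+1) y).curryLeft) ?_ ?_ (fun y => hg l y) x
    · rw [Metric.tendstoUniformly_iff]
      intro ε hε
      obtain ⟨N, hN⟩ := hG 0 (l+1) (ε / 2) (by positivity)
      filter_upwards [eventually_ge_atTop N] with i hi y
      have := hN i hi y
      rw [pow_zero, one_mul] at this
      rw [dist_comm, dist_eq_norm]
      have e : (iteratedFDeriv ℝ (l+1) (u i) y).curryLeft - (g (l+1) y).curryLeft =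
        (iteratedFDeriv ℝ (l+1) (u i) y - g (l+1) y).curryLeft := rfl
      rw [e, ContinuousMultilinearMap.curryLeft_norm]
      linarith
    · intro i y
      exact (((u i).smooth ⊤).ftaylorSeries).fderiv l (by exact_mod_cast ENat.coe_lt_top l) y
  have hI : ∀ l x, iteratedFDeriv ℝ l (fun x => (g 0 x).curry0) x = g l x := fun l x =>
    (hT.eq_iteratedFDeriv (by exact_mod_cast le_top) x).symm
  let f : SchwartzMap E F :=
    { toFun := fun x => (g 0 x).curry0
      smooth' := hT.contDiff
      decay' := by
        intro k l
        obtain ⟨N, hN⟩ := hG k l 1 one_pos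
        refine ⟨SchwartzMap.seminorm ℝ k l (u N) + 1, fun x => ?_⟩
        rw [hI]
        have h1 := hN N le_rfl x
        have h2 := SchwartzMap.le_seminorm ℝ k l (u N) x
        have h3 : ‖g l x‖ ≤ ‖iteratedFDeriv ℝ l (u N) x‖ +
            ‖iteratedFDeriv ℝ l (u N) x - g l x‖ := by
          have := norm_sub_le (iteratedFDeriv ℝ l (u N) x) (iteratedFDeriv ℝ l (u N) x - g l x)
          simpa using this
        have h4 := mul_le_mul_of_nonneg_left h3 (by positivity : 0 ≤ ‖x‖ ^ k)
        rw [mul_add] at h4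
        linarith }
  refine ⟨f, ?_⟩
  rw [(schwartz_withSeminorms ℝ E F).tendsto_nhds_atTop]
  rintro ⟨k, l⟩ ε hε
  obtain ⟨N, hN⟩ := hG k l (ε / 2) (by positivity)
  refine ⟨N, fun i hi => ?_⟩
  have : SchwartzMap.seminorm ℝ k l (u i - f) ≤ ε / 2 := by
    apply SchwartzMap.seminorm_le_bound _ _ _ _ (by positivity)
    intro x
    rw [FunLike.coe_sub, iteratedFDeriv_sub_apply ((u i).contDiffAt _)
      (f.contDiffAt _)]
    have e : iteratedFDeriv ℝ l f x = g l x := hI l x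
    rw [e]
    exact hN i hi x
  exact lt_of_le_of_lt this (by linarith)

theorem sch_barrelled (n : ℕ) : BarrelledSpace ℂ (Sch n) := by
  have : CompleteSpace (Sch n) := sch_complete
  have : (uniformity (Sch n)).IsCountablyGenerated :=
    IsUniformAddGroup.uniformity_countably_generated
  have : BaireSpace (Sch n) := inferInstance
  infer_instance

open Filter Topology in
theorem sch_deriv_cont {n m : ℕ} (A : Sch n →ₗ[ℂ] Sch m)
    (h : ∀ p : EuclideanSpace ℝ (Fin m), Continuous fun φ : Sch n => (A φ) p) (l : ℕ) :
    ∀ (x : EuclideanSpace ℝ (Fin m)) (v : Fin l → EuclideanSpace ℝ (Fin m)),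
      ∃ T : Sch n →L[ℂ] ℂ, ∀ φ, T φ = iteratedFDeriv ℝ l (A φ) x v := by
  have := sch_barrelled n
  induction l with
  | zero =>
    intro x v
    refine ⟨{ toFun := fun φ => A φ x, map_add' := ?_, map_smul' := ?_, cont := h x }, ?_⟩
    · intro a b; simp
    · intro a b; simp
    · intro φ; simp
  | succ l ih =>
    intro x v
    choose T hT using ih
    let G : ℝ → Sch n →L[ℂ] ℂ := fun c =>
      (c : ℂ) • (T (x + c⁻¹ • v 0) (Fin.tail v) - T x (Fin.tail v))
    have hlim : Tendsto (fun c φ => G c φ) atTop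
        (𝓝 (fun φ => iteratedFDeriv ℝ (l+1) (A φ) x v)) := by
      rw [tendsto_pi_nhds]
      intro φ
      have hd : HasFDerivAt (iteratedFDeriv ℝ l (A φ))
          (fderiv ℝ (iteratedFDeriv ℝ l (A φ)) x) x := by
        apply DifferentiableAt.hasFDerivAt
        exact (((A φ).smooth ⊤).differentiable_iteratedFDeriv
          (by exact_mod_cast ENat.coe_lt_top l)).differentiableAt
      have h1 := hd.lim_real (v 0)
      have h2 := ((ContinuousMultilinearMap.apply ℝ
        (fun _ : Fin l => EuclideanSpace ℝ (Fin m)) ℂ (Fin.tail v)).continuous.tendsto _).comp h1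
      rw [iteratedFDeriv_succ_apply_left]
      refine h2.congr fun c => ?_
      simp [G, hT]
    exact ⟨continuousLinearMapOfTendsto G hlim, fun φ => rfl⟩

theorem sch_cont {n m : ℕ} (A : Sch n →ₗ[ℂ] Sch m)
    (h : ∀ p : EuclideanSpace ℝ (Fin m), Continuous fun φ : Sch n => (A φ) p) :
    Continuous A := by
  have := sch_barrelled n
  refine (schwartz_withSeminorms ℂ (EuclideanSpace ℝ (Fin m)) ℂ).continuous_of_continuous_comp A ?_
  rintro ⟨k, l⟩
  apply Seminorm.continuous_of_lowerSemicontinuous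
  rw [lowerSemicontinuous_iff_isClosed_preimage]
  intro y
  rcases lt_or_ge y 0 with hy | hy
  · convert isClosed_empty
    ext φ
    simp only [Set.mem_preimage, Set.mem_Iic, Set.mem_empty_iff_false, iff_false, not_le]
    exact hy.trans_le (apply_nonneg _ _)
  · have e : (((schwartzSeminormFamily ℂ (EuclideanSpace ℝ (Fin m)) ℂ) (k, l)).comp A) ⁻¹'
        Set.Iic y = ⋂ (x : EuclideanSpace ℝ (Fin m)),
          ⋂ (v : Fin l → EuclideanSpace ℝ (Fin m)),
          {φ : Sch n | ‖x‖ ^ k * ‖iteratedFDeriv ℝ l (A φ) x v‖ ≤ y * ∏ i, ‖v i‖} := by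
      ext φ
      simp only [Set.mem_preimage, Set.mem_Iic, Set.mem_iInter, Set.mem_setOf_eq,
        Seminorm.comp_apply, SchwartzMap.schwartzSeminormFamily_apply]
      constructor
      · intro hφ x v
        have h1 := (SchwartzMap.le_seminorm ℂ k l (A φ) x).trans hφ
        calc ‖x‖ ^ k * ‖iteratedFDeriv ℝ l (A φ) x v‖
            ≤ ‖x‖ ^ k * (‖iteratedFDeriv ℝ l (A φ) x‖ * ∏ i, ‖v i‖) := by
              gcongr
              exact ContinuousMultilinearMap.le_opNorm _ _
          _ = (‖x‖ ^ k * ‖iteratedFDeriv ℝ l (A φ) x‖) * ∏ i, ‖v i‖ := by ring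
          _ ≤ _ := by gcongr
      · intro hφ
        refine SchwartzMap.seminorm_le_bound _ _ _ _ hy fun x => ?_
        have : ‖(‖x‖ ^ k) • iteratedFDeriv ℝ l (A φ) x‖ ≤ y := by
          refine ContinuousMultilinearMap.opNorm_le_bound hy fun v => ?_
          simpa [norm_smul] using hφ x v
        simpa [norm_smul] using this
    rw [e]
    refine isClosed_iInter fun x => isClosed_iInter fun v => ?_
    obtain ⟨T, hT⟩ := sch_deriv_cont A h l x v
    simp only [← hT]
    exact isClosed_le (by fun_prop) continuous_const

/-- characterization of transposability: a linear map `A : 𝓢ₙ → 𝓢ₘ` is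
topologically transposable (for every tempered distribution `a ∈ 𝓢ₘ'` the composition
`a ∘ A` is continuous) if and only if for every `p ∈ ℝᵐ` the composition `δ_p ∘ A`, i.e.
the linear functional `φ ↦ (A φ) p`, is continuous. -/
theorem transposable_iff_dirac_compositions_continuous {n m : ℕ} (A : Sch n →ₗ[ℂ] Sch m) :
    (∀ a : Sch m →L[ℂ] ℂ, Continuous fun φ : Sch n => a (A φ)) ↔
      (∀ p : EuclideanSpace ℝ (Fin m), Continuous fun φ : Sch n => (A φ) p) := by
  constructor
  · intro h p
    exact h ((BoundedContinuousFunction.evalCLM ℂ p).comp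
      (SchwartzMap.toBoundedContinuousFunctionCLM ℂ (EuclideanSpace ℝ (Fin m)) ℂ))
  · intro h a
    exact a.continuous.comp (sch_cont A h)
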